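/- For every complex s with Re(s) > 1, ∑'_{(m,k)} [ 1/(3m² + 5k²)^s + 1/(m² + 15k²)^s ] = 2·(1 + 2^{1−2s} − 2^{1−s})·ζ(s)·L(χ_{-15}, s), where ζ is the Riemann zeta function. -/

import Mathlib

/-- The quadratic Dirichlet character modulo 3:
`χ₋₃(n) = 1` if `n ≡ 1 (mod 3)`, `-1` if `n ≡ 2 (mod 3)`, `0` if `3 ∣ n`. -/
def chiNeg3 (n : ℕ) : ℤ :=
  if n % 3 = 1 then 1 else if n % 3 = 2 then -1 else 0

/-- The quadratic Dirichlet character modulo 5 given by the Legendre symbol `(n/5)`. -/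
def chi5 (n : ℕ) : ℤ :=
  if n % 5 = 1 ∨ n % 5 = 4 then 1 else if n % 5 = 2 ∨ n % 5 = 3 then -1 else 0

/-- The quadratic Dirichlet character modulo 15, `χ₋₁₅(n) = (n/3)·(n/5)`. -/
def chiNeg15 (n : ℕ) : ℤ := chiNeg3 n * chi5 n

/-- The Dirichlet `L`-series `L(χ, s) = ∑_{n ≥ 1} χ(n) n^{-s}`. -/
noncomputable def LSer (χ : ℕ → ℤ) (s : ℂ) : ℂ :=
  ∑' n : ℕ, (χ (n + 1) : ℂ) / ((n : ℂ) + 1) ^ s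

/-!
Let `r(n)` count the representations of `n` by the two classes `x² + xy + 4y²` and
`2x² + xy + 2y²` of forms of discriminant `-15`. For a prime `p` the sublattices of index `p` on
which a form is divisible by `p` correspond to its roots modulo `p`, of which there are
`1 + χ₋₁₅(p)`, and the form becomes on each of them `p` times a form of discriminant `-15`, whose
class is read off from its genus modulo `3` or `5`. Counting vectors through these sublattices
gives `r(pn) + χ₋₁₅(p) r(n/p) = (1 + χ₋₁₅(p)) r(n)`, the recursion satisfied by the divisor sums of
`χ₋₁₅`, so `r(n) = 2 ∑_{d ∣ n} χ₋₁₅(d)`, which has the Dirichlet series `2 ζ(s) L(χ₋₁₅, s)`.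

The forms `x² + 15y²` and `3x² + 5y²` are the restrictions to even `y` of forms in the two classes.
Parity of the values turns this into `r(n) - 2 r(n/2) + 2 r(n/4)` for the sum of their
representation numbers, which accounts for the factor `1 + 2^(1-2s) - 2^(1-s)`.
-/

/-- The coefficients of `d⁻ˢ ∑ F(n) n⁻ˢ`: the value `F (n / d)`, read as `0` unless `d ∣ n`. -/
def dilate {R : Type*} [Zero R] (d : ℕ) (F : ℕ → R) (n : ℕ) : R :=
  if d ∣ n then F (n / d) else 0

lemma dilate_mul {R : Type*} [Zero R] {d : ℕ} (hd : d ≠ 0) (F : ℕ → R) (n : ℕ) :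
    dilate d F (d * n) = F n := by
  rw [dilate, if_pos (Nat.dvd_mul_right d n), Nat.mul_div_cancel_left n (Nat.pos_of_ne_zero hd)]

lemma dilate_mul_mul {R : Type*} [Zero R] {d : ℕ} (hd : d ≠ 0) (e : ℕ) (F : ℕ → R) (n : ℕ) :
    dilate (d * e) F (d * n) = dilate e F n := by
  simp only [dilate, Nat.mul_dvd_mul_iff_left (Nat.pos_of_ne_zero hd),
    Nat.mul_div_mul_left n e (Nat.pos_of_ne_zero hd)]

lemma dilate_of_not_dvd {R : Type*} [Zero R] {d n : ℕ} (hdn : ¬d ∣ n) (F : ℕ → R) :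
    dilate d F n = 0 :=
  if_neg hdn

lemma intCast_dilate {R : Type*} [Ring R] (d : ℕ) (F : ℕ → ℤ) (n : ℕ) :
    ((dilate d F n : ℤ) : R) = dilate d (fun m => (F m : R)) n := by
  simp only [dilate, Int.cast_ite, Int.cast_zero]

section DivisorSums

open Finset

variable {R : Type*} [CommRing R] (χ : ℕ →* R) {p : ℕ}

lemma sum_divisors_prime_mul (hp : p.Prime) {n : ℕ} (hn : n ≠ 0) :
    ∑ d ∈ (p * n).divisors, χ d + χ p * dilate p (fun m => ∑ d ∈ m.divisors, χ d) n =
      (1 + χ p) * ∑ d ∈ n.divisors, χ d := by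
  have hinj : Function.Injective (p * ·) := fun _ _ h => Nat.eq_of_mul_eq_mul_left hp.pos h
  have sum_image_mul (m : ℕ) :
      ∑ d ∈ m.divisors.image (p * ·), χ d = χ p * ∑ d ∈ m.divisors, χ d := by
    rw [sum_image hinj.injOn, mul_sum]
    simp only [map_mul]
  have hunion : (p * n).divisors = n.divisors ∪ n.divisors.image (p * ·) := by
    rw [Nat.divisors_mul, hp.divisors]
    ext d
    simp [mem_mul, eq_comm]
  have hinter : ∑ d ∈ n.divisors ∩ n.divisors.image (p * ·), χ d =
      χ p * dilate p (fun m => ∑ d ∈ m.divisors, χ d) n := by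
    by_cases hpn : p ∣ n
    · obtain ⟨m, rfl⟩ := hpn
      rw [dilate_mul hp.ne_zero, ← sum_image_mul]
      refine sum_congr ?_ fun _ _ => rfl
      ext d
      simp only [mem_inter, mem_image, Nat.mem_divisors]
      constructor
      · rintro ⟨⟨hd, hm⟩, c, -, rfl⟩
        exact ⟨c, ⟨Nat.dvd_of_mul_dvd_mul_left hp.pos hd, right_ne_zero_of_mul hm⟩, rfl⟩
      · rintro ⟨c, ⟨hc, -⟩, rfl⟩
        exact ⟨⟨mul_dvd_mul_left p hc, hn⟩, c, ⟨hc.mul_left p, hn⟩, rfl⟩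
    · rw [dilate_of_not_dvd hpn, mul_zero]
      refine sum_eq_zero fun d hd => absurd ?_ hpn
      obtain ⟨hd, hpd⟩ := mem_inter.mp hd
      obtain ⟨c, -, rfl⟩ := mem_image.mp hpd
      exact (dvd_mul_right p c).trans (Nat.dvd_of_mem_divisors hd)
  rw [hunion, ← hinter, sum_union_inter, sum_image_mul]
  ring

lemma eq_mul_sum_divisors_of_prime_mul {F : ℕ → R}
    (hF : ∀ p : ℕ, p.Prime → ∀ n ≠ 0, F (p * n) + χ p * dilate p F n = (1 + χ p) * F n)
    {n : ℕ} (hn : n ≠ 0) : F n = F 1 * ∑ d ∈ n.divisors, χ d := by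
  induction n using Nat.strong_induction_on with
  | _ n ih =>
    by_cases h1 : n = 1
    · simp [h1]
    obtain ⟨p, hp, m, rfl⟩ := Nat.exists_prime_and_dvd h1
    have hm : m ≠ 0 := right_ne_zero_of_mul hn
    have hlt {k : ℕ} (hk : k ≠ 0) : k < p * k :=
      lt_mul_of_one_lt_left (Nat.pos_of_ne_zero hk) hp.one_lt
    have hdilate : dilate p F m = F 1 * dilate p (fun k => ∑ d ∈ k.divisors, χ d) m := by
      by_cases hpm : p ∣ m
      · obtain ⟨k, rfl⟩ := hpm
        have hk : k ≠ 0 := right_ne_zero_of_mul hm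
        rw [dilate_mul hp.ne_zero, dilate_mul hp.ne_zero]
        exact ih k ((hlt hk).trans (hlt hm)) hk
      · rw [dilate_of_not_dvd hpm, dilate_of_not_dvd hpm, mul_zero]
    linear_combination hF p hp m hm - F 1 * sum_divisors_prime_mul χ hp hm
      + (1 + χ p) * ih m (hlt hm) hm - χ p * hdilate

end DivisorSums

section Character

open NumberTheorySymbols

lemma chiNeg15_eq_jacobiSym (n : ℕ) : chiNeg15 n = J(n | 15) := by
  rw [jacobiSym.mod_left]
  have hlt : n % 15 < 15 := Nat.mod_lt _ (by norm_num)
  have hmod : chiNeg15 n = chiNeg15 (n % 15) := by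
    simp only [chiNeg15, chiNeg3, chi5, Nat.mod_mod_of_dvd n (show 3 ∣ 15 by norm_num),
      Nat.mod_mod_of_dvd n (show 5 ∣ 15 by norm_num)]
  rw [hmod, ← Nat.cast_ofNat, ← Int.natCast_mod]
  generalize n % 15 = r at hlt ⊢
  interval_cases r <;> norm_num [chiNeg15, chiNeg3, chi5]

/-- `chiNeg15` as a homomorphism of monoids. -/
def chiNeg15Hom : ℕ →* ℤ where
  toFun := chiNeg15
  map_one' := by decide
  map_mul' m n := by simp only [chiNeg15_eq_jacobiSym, Nat.cast_mul, jacobiSym.mul_left]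

lemma legendreSym_neg_fifteen {p : ℕ} [Fact p.Prime] (hp : p ≠ 2) :
    legendreSym p (-15) = chiNeg15 p := by
  have hodd : Odd p := (Fact.out : p.Prime).odd_of_ne_two hp
  calc legendreSym p (-15) = J(-15 | p) := jacobiSym.legendreSym.to_jacobiSym p _
    _ = ZMod.χ₄ p * J((15 : ℕ) | p) := jacobiSym.neg 15 hodd
    _ = (-1) ^ (p / 2) * ((-1) ^ (7 * (p / 2)) * J(p | 15)) := by
      rw [ZMod.χ₄_eq_neg_one_pow (Nat.odd_iff.mp hodd),
        jacobiSym.quadratic_reciprocity (by decide) hodd]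
    _ = chiNeg15 p := by
      rw [chiNeg15_eq_jacobiSym, ← mul_assoc, ← pow_add, Even.neg_one_pow ⟨4 * (p / 2), by ring⟩,
        one_mul]

end Character

/-- The integral binary quadratic form `a x² + b x y + c y²`, recorded by its coefficients. -/
structure BinQuadForm where
  a : ℤ
  b : ℤ
  c : ℤ

namespace BinQuadForm

/-- The value of a form at an integer vector. -/
def eval (f : BinQuadForm) (v : ℤ × ℤ) : ℤ :=
  f.a * v.1 ^ 2 + f.b * v.1 * v.2 + f.c * v.2 ^ 2

/-- The discriminant `b² - 4ac`. -/
def disc (f : BinQuadForm) : ℤ := f.b ^ 2 - 4 * f.a * f.c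

/-- Positive definiteness, through the sign of the leading coefficient and of the discriminant. -/
def PosDef (f : BinQuadForm) : Prop := 0 < f.a ∧ f.disc < 0

/-- Equivalence of forms under `GL₂(ℤ)`, encoded as the additive automorphisms of `ℤ × ℤ`;
improper equivalences are allowed, since they preserve representation numbers too. -/
def IsEquiv (f g : BinQuadForm) : Prop :=
  ∃ e : ℤ × ℤ ≃+ ℤ × ℤ, ∀ v, f.eval (e v) = g.eval v

/-- The number of representations of `n` by `f`; it is `0` by convention if there are infinitely
many, which does not happen for positive definite forms. -/
noncomputable def repCount (f : BinQuadForm) (n : ℕ) : ℕ := {v | f.eval v = n}.ncard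

section PositiveDefinite

variable {f : BinQuadForm}

lemma four_mul_a_mul_eval (f : BinQuadForm) (v : ℤ × ℤ) :
    4 * f.a * f.eval v = (2 * f.a * v.1 + f.b * v.2) ^ 2 - f.disc * v.2 ^ 2 := by
  simp only [eval, disc]
  ring

lemma PosDef.eval_pos (hf : f.PosDef) {v : ℤ × ℤ} (hv : v ≠ 0) : 0 < f.eval v := by
  have ha : 0 < 4 * f.a := by linarith [hf.1]
  refine pos_of_mul_pos_right ?_ ha.le
  rw [four_mul_a_mul_eval]
  by_cases hy : v.2 = 0
  · have hx : v.1 ≠ 0 := fun hx => hv (Prod.ext hx hy)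
    have : f.a ≠ 0 := hf.1.ne'
    simp only [hy, mul_zero, add_zero, ne_eq, OfNat.ofNat_ne_zero, not_false_eq_true, zero_pow,
      sub_zero]
    positivity
  · have : 0 < -f.disc * v.2 ^ 2 := mul_pos (neg_pos.mpr hf.2) (by positivity)
    linarith [sq_nonneg (2 * f.a * v.1 + f.b * v.2)]

lemma PosDef.finite_setOf_eval_eq (hf : f.PosDef) (n : ℤ) : {v | f.eval v = n}.Finite := by
  have hinj : Function.Injective fun v : ℤ × ℤ => (2 * f.a * v.1 + f.b * v.2, v.2) := by
    rintro ⟨x, y⟩ ⟨x', y'⟩ h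
    obtain ⟨hx, rfl⟩ := Prod.mk.inj h
    simpa [hf.1.ne'] using hx
  have hfin := (Set.finite_Icc (-(4 * f.a * n)) (4 * f.a * n)).prod
    (Set.finite_Icc (-(4 * f.a * n)) (4 * f.a * n))
  refine (hfin.preimage hinj.injOn).subset fun v hv => ?_
  have key := f.four_mul_a_mul_eval v
  rw [show f.eval v = n from hv] at key
  have hdisc : v.2 ^ 2 ≤ -f.disc * v.2 ^ 2 :=
    le_mul_of_one_le_left (sq_nonneg _) (by linarith [Int.add_one_le_iff.mpr hf.2])
  have abs_le_sq (m : ℤ) : |m| ≤ m ^ 2 := sq_abs m ▸ Int.le_self_sq |m|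
  exact ⟨abs_le.mp ((abs_le_sq _).trans (by linarith [sq_nonneg v.2])),
    abs_le.mp ((abs_le_sq _).trans (by linarith [sq_nonneg (2 * f.a * v.1 + f.b * v.2)]))⟩

end PositiveDefinite

section DiscOneModEight

variable {f : BinQuadForm}

lemma odd_b (hD : f.disc % 8 = 1) : Odd f.b := by
  refine Int.not_even_iff_odd.mp fun ⟨k, hk⟩ => ?_
  have hdisc : f.disc = 4 * (k ^ 2 - f.a * f.c) := by rw [disc, hk]; ring
  omega

lemma even_c (ha : Odd f.a) (hD : f.disc % 8 = 1) : Even f.c := by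
  have hac : Even (f.a * f.c) := by
    have hb := Int.eight_dvd_sq_sub_one_of_odd (odd_b hD)
    have hdisc : f.disc = f.b ^ 2 - 4 * (f.a * f.c) := by rw [disc]; ring
    rw [Int.even_iff]
    omega
  exact (Int.even_mul.mp hac).resolve_left (Int.not_even_iff_odd.mpr ha)

end DiscOneModEight

section Equivalence

variable {f g h : BinQuadForm}

lemma IsEquiv.trans (hfg : f.IsEquiv g) (hgh : g.IsEquiv h) : f.IsEquiv h := by
  obtain ⟨e, he⟩ := hfg
  obtain ⟨e', he'⟩ := hgh
  exact ⟨e'.trans e, fun v => (he _).trans (he' v)⟩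

lemma IsEquiv.exists_eval_eq (hfg : f.IsEquiv g) (v : ℤ × ℤ) : ∃ w, g.eval w = f.eval v := by
  obtain ⟨e, he⟩ := hfg
  exact ⟨e.symm v, by rw [← he, e.apply_symm_apply]⟩

lemma IsEquiv.repCount_eq (hfg : f.IsEquiv g) : f.repCount = g.repCount := by
  obtain ⟨e, he⟩ := hfg
  funext n
  refine (Set.ncard_congr' (e.toEquiv.subtypeEquiv fun v => ?_)).symm
  exact iff_of_eq (congrArg (· = (n : ℤ)) (he v).symm)

lemma isEquiv_swap (a b c : ℤ) : IsEquiv ⟨a, b, c⟩ ⟨c, b, a⟩ :=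
  ⟨AddEquiv.prodComm, fun v => by simp only [eval, AddEquiv.coe_prodComm, Prod.swap]; ring⟩

lemma isEquiv_neg (a b c : ℤ) : IsEquiv ⟨a, b, c⟩ ⟨a, -b, c⟩ :=
  ⟨(AddEquiv.refl ℤ).prodCongr (AddEquiv.neg ℤ), fun v => by
    change a * v.1 ^ 2 + b * v.1 * -v.2 + c * (-v.2) ^ 2 = _
    simp only [eval]; ring⟩

lemma isEquiv_shift (a b c k : ℤ) :
    IsEquiv ⟨a, b, c⟩ ⟨a, b + 2 * a * k, a * k ^ 2 + b * k + c⟩ :=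
  ⟨{ toFun := fun v => (v.1 + k * v.2, v.2)
     invFun := fun v => (v.1 - k * v.2, v.2)
     left_inv := fun v => by simp
     right_inv := fun v => by simp
     map_add' := fun v w => by ext <;> simp only [Prod.fst_add, Prod.snd_add]; ring },
    fun v => by simp only [eval, AddEquiv.coe_mk, Equiv.coe_fn_mk]; ring⟩

end Equivalence

section Reduction

variable {f : BinQuadForm}

lemma exists_isEquiv_b_le_a (hf : 0 < f.a) :
    ∃ g, f.IsEquiv g ∧ g.a = f.a ∧ g.disc = f.disc ∧ 0 ≤ g.b ∧ g.b ≤ g.a := by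
  set k := -((f.b + f.a) / (2 * f.a))
  have hshift := isEquiv_shift f.a f.b f.c k
  have hmod : f.b + 2 * f.a * k = (f.b + f.a) % (2 * f.a) - f.a := by
    linarith [Int.mul_ediv_add_emod (f.b + f.a) (2 * f.a), mul_neg (2 * f.a) (-k), neg_neg k]
  have hlow := Int.emod_nonneg (f.b + f.a) (show 2 * f.a ≠ 0 by omega)
  have hhigh := Int.emod_lt_of_pos (f.b + f.a) (show 0 < 2 * f.a by omega)
  rcases le_total 0 (f.b + 2 * f.a * k) with hb | hb
  · exact ⟨_, hshift, rfl, by simp only [disc]; ring, hb, by dsimp only; omega⟩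
  · exact ⟨_, hshift.trans (isEquiv_neg ..), rfl, by simp only [disc]; ring, neg_nonneg.mpr hb,
      by dsimp only; omega⟩

/-- A form with `0 ≤ b ≤ a ≤ c`; up to `GL₂(ℤ)`-equivalence these are Gauss's reduced forms. -/
def IsReduced (f : BinQuadForm) : Prop := 0 ≤ f.b ∧ f.b ≤ f.a ∧ f.a ≤ f.c

lemma PosDef.exists_isEquiv_isReduced (hf : f.PosDef) :
    ∃ g, f.IsEquiv g ∧ 0 < g.a ∧ g.disc = f.disc ∧ g.IsReduced := by
  induction hN : f.a.toNat using Nat.strong_induction_on generalizing f with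
  | _ N ih =>
    obtain ⟨g, hfg, ha, hdisc, hb, hba⟩ := exists_isEquiv_b_le_a hf.1
    have hg : g.PosDef := ⟨ha ▸ hf.1, hdisc ▸ hf.2⟩
    by_cases hac : g.a ≤ g.c
    · exact ⟨g, hfg, hg.1, hdisc, hb, hba, hac⟩
    · have hc : 0 < g.c := by simpa [eval] using hg.eval_pos (v := (0, 1)) (by simp)
      have hswap : disc ⟨g.c, g.b, g.a⟩ = f.disc := by rw [← hdisc]; simp only [disc]; ring
      obtain ⟨r, hgr, hr⟩ :=
        ih g.c.toNat (by omega) (f := ⟨g.c, g.b, g.a⟩) ⟨hc, hswap ▸ hf.2⟩ rfl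
      exact ⟨r, (hfg.trans (isEquiv_swap ..)).trans hgr, hswap ▸ hr⟩

end Reduction

section DiscNegFifteen

/-- The reduced form `x² + xy + 4y²` of the principal class of discriminant `-15`. -/
def principalForm : BinQuadForm := ⟨1, 1, 4⟩

/-- The reduced form `2x² + xy + 2y²` of the other class of discriminant `-15`. -/
def nonprincipalForm : BinQuadForm := ⟨2, 1, 2⟩

variable {f : BinQuadForm}

lemma isEquiv_principalForm_or_nonprincipalForm (hf : f.PosDef) (hD : f.disc = -15) :
    f.IsEquiv principalForm ∨ f.IsEquiv nonprincipalForm := by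
  obtain ⟨⟨a, b, c⟩, hfg, ha, hdisc, hb, hba, hac⟩ := hf.exists_isEquiv_isReduced
  rw [hD] at hdisc
  simp only [disc] at *
  have ha2 : a ≤ 2 := by nlinarith
  have hb1 : b = 1 := by
    interval_cases a <;> interval_cases b <;> omega
  subst hb1
  obtain rfl | rfl : a = 1 ∨ a = 2 := by omega
  · obtain rfl : c = 4 := by omega
    exact .inl hfg
  · obtain rfl : c = 2 := by omega
    exact .inr hfg

-- The two classes lie in distinct genera: modulo `3` and modulo `5` the principal form is a square
-- and the other form is twice a square.

lemma principalForm_eval_zmod_three (v : ℤ × ℤ) : (principalForm.eval v : ZMod 3) ≠ 2 := by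
  have : ∀ x y : ZMod 3, 1 * x ^ 2 + 1 * x * y + 4 * y ^ 2 ≠ 2 := by decide
  simpa [principalForm, eval] using this v.1 v.2

lemma nonprincipalForm_eval_zmod_three (v : ℤ × ℤ) : (nonprincipalForm.eval v : ZMod 3) ≠ 1 := by
  have : ∀ x y : ZMod 3, 2 * x ^ 2 + 1 * x * y + 2 * y ^ 2 ≠ 1 := by decide
  simpa [nonprincipalForm, eval] using this v.1 v.2

lemma principalForm_eval_zmod_five (v : ℤ × ℤ) : (principalForm.eval v : ZMod 5) ≠ 3 := by
  have : ∀ x y : ZMod 5, 1 * x ^ 2 + 1 * x * y + 4 * y ^ 2 ≠ 3 := by decide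
  simpa [principalForm, eval] using this v.1 v.2

lemma nonprincipalForm_eval_zmod_five (v : ℤ × ℤ) : (nonprincipalForm.eval v : ZMod 5) ≠ 1 := by
  have : ∀ x y : ZMod 5, 2 * x ^ 2 + 1 * x * y + 2 * y ^ 2 ≠ 1 := by decide
  simpa [nonprincipalForm, eval] using this v.1 v.2

lemma isEquiv_principalForm_of_a (hf : f.PosDef) (hD : f.disc = -15)
    (ha : (f.a : ZMod 3) = 1 ∨ (f.a : ZMod 5) = 1) : f.IsEquiv principalForm := by
  refine (isEquiv_principalForm_or_nonprincipalForm hf hD).resolve_right fun h => ?_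
  obtain ⟨w, hw⟩ := h.exists_eval_eq (1, 0)
  have hwa : nonprincipalForm.eval w = f.a := by rw [hw]; simp [eval]
  rw [← hwa] at ha
  exact ha.elim (nonprincipalForm_eval_zmod_three w) (nonprincipalForm_eval_zmod_five w)

lemma isEquiv_nonprincipalForm_of_a (hf : f.PosDef) (hD : f.disc = -15)
    (ha : (f.a : ZMod 3) = 2 ∨ (f.a : ZMod 5) = 3) : f.IsEquiv nonprincipalForm := by
  refine (isEquiv_principalForm_or_nonprincipalForm hf hD).resolve_left fun h => ?_
  obtain ⟨w, hw⟩ := h.exists_eval_eq (1, 0)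
  have hwa : principalForm.eval w = f.a := by rw [hw]; simp [eval]
  rw [← hwa] at ha
  exact ha.elim (principalForm_eval_zmod_three w) (principalForm_eval_zmod_five w)

end DiscNegFifteen

section Neighbors

open Finset

variable {f : BinQuadForm} {p : ℕ} [Fact p.Prime] {u : ZMod p}

/-- The roots `u` of `a u² + b u + c` modulo `p`. If `p ∤ a`, they index the lattices
`{(x, y) | x ≡ u y mod p}` of index `p` on which all values of `f` are divisible by `p`. -/
def roots (f : BinQuadForm) (p : ℕ) [Fact p.Prime] : Finset (ZMod p) :=
  {u | (f.a : ZMod p) * u ^ 2 + f.b * u + f.c = 0}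

/-- The `p`-neighbour of `f` at a root `u` modulo `p`: the form `f / p` on the lattice
`{(x, y) | x ≡ u y mod p}` in the basis `(p, 0)`, `(u, 1)`. The division by `p` is exact
for `u ∈ f.roots p`. -/
def neighbor (f : BinQuadForm) (p : ℕ) (u : ZMod p) : BinQuadForm :=
  ⟨p * f.a, 2 * f.a * u.val + f.b, (f.a * u.val ^ 2 + f.b * u.val + f.c) / p⟩

lemma mul_neighbor_c (hu : u ∈ f.roots p) :
    p * (f.neighbor p u).c = f.a * u.val ^ 2 + f.b * u.val + f.c := by
  refine Int.mul_ediv_cancel' ?_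
  rw [← ZMod.intCast_zmod_eq_zero_iff_dvd]
  simpa [roots] using hu

lemma disc_neighbor (hu : u ∈ f.roots p) : (f.neighbor p u).disc = f.disc := by
  have hc := mul_neighbor_c hu
  simp only [disc, neighbor] at hc ⊢
  linear_combination -4 * f.a * hc

lemma PosDef.neighbor (hf : f.PosDef) (hu : u ∈ f.roots p) : (f.neighbor p u).PosDef :=
  ⟨mul_pos (mod_cast (Fact.out : p.Prime).pos) hf.1, disc_neighbor hu ▸ hf.2⟩

lemma eval_eq_mul_eval_neighbor (hu : u ∈ f.roots p) (v : ℤ × ℤ) :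
    f.eval (p * v.1 + u.val * v.2, v.2) = p * (f.neighbor p u).eval v := by
  have hc := mul_neighbor_c hu
  simp only [eval, BinQuadForm.neighbor] at hc ⊢
  linear_combination -v.2 ^ 2 * hc

lemma repCount_neighbor (hu : u ∈ f.roots p) (n : ℕ) :
    (f.neighbor p u).repCount n =
      {v : ℤ × ℤ | f.eval v = (p * n : ℕ) ∧ (v.1 : ZMod p) = u * v.2}.ncard := by
  have hp : (p : ℤ) ≠ 0 := mod_cast (Fact.out : p.Prime).ne_zero
  have hinj : Function.Injective fun v : ℤ × ℤ => ((p : ℤ) * v.1 + u.val * v.2, v.2) := by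
    rintro ⟨x, y⟩ ⟨x', y'⟩ h
    obtain ⟨hx, rfl⟩ := Prod.mk.inj h
    simpa [(Fact.out : p.Prime).ne_zero] using hx
  rw [repCount, ← Set.ncard_image_of_injective _ hinj]
  congr 1
  ext ⟨x, y⟩
  constructor
  · rintro ⟨v, hv, hvx⟩
    rw [Set.mem_ofPred_eq, ← hvx, eval_eq_mul_eval_neighbor hu, hv]
    simp
  · rintro ⟨hv, hx⟩
    obtain ⟨z, hz⟩ : (p : ℤ) ∣ x - u.val * y := by
      rw [← ZMod.intCast_zmod_eq_zero_iff_dvd]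
      simpa [sub_eq_zero] using hx
    obtain rfl : x = p * z + u.val * y := by linarith
    rw [eval_eq_mul_eval_neighbor hu (z, y), Nat.cast_mul] at hv
    exact ⟨(z, y), mul_left_cancel₀ hp hv, rfl⟩

lemma dilate_repCount (f : BinQuadForm) {d : ℕ} (hd : d ≠ 0) (n : ℕ) :
    dilate d f.repCount n =
      {v : ℤ × ℤ | f.eval v = (d * n : ℕ) ∧ (d : ℤ) ∣ v.1 ∧ (d : ℤ) ∣ v.2}.ncard := by
  have hd' : (d : ℤ) ≠ 0 := mod_cast hd
  have heval (v : ℤ × ℤ) : f.eval (d * v.1, d * v.2) = d * (d * f.eval v) := by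
    simp only [eval]; ring
  by_cases hdn : d ∣ n
  · obtain ⟨m, rfl⟩ := hdn
    have hinj : Function.Injective fun v : ℤ × ℤ => ((d : ℤ) * v.1, (d : ℤ) * v.2) := by
      rintro ⟨x, y⟩ ⟨x', y'⟩ h
      simpa [hd] using h
    rw [dilate_mul hd, repCount, ← Set.ncard_image_of_injective _ hinj]
    congr 1
    ext ⟨x, y⟩
    constructor
    · rintro ⟨v, hv, hvx⟩
      obtain ⟨rfl, rfl⟩ := Prod.mk.inj hvx
      refine ⟨?_, Int.dvd_mul_right .., Int.dvd_mul_right ..⟩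
      rw [heval, hv]
      push_cast
      rfl
    · rintro ⟨hv, ⟨z, rfl⟩, ⟨w, rfl⟩⟩
      rw [heval (z, w)] at hv
      push_cast at hv
      exact ⟨(z, w), mul_left_cancel₀ hd' (mul_left_cancel₀ hd' hv), rfl⟩
  · rw [dilate_of_not_dvd hdn, eq_comm]
    convert Set.ncard_empty (ℤ × ℤ)
    refine Set.eq_empty_iff_forall_notMem.mpr ?_
    rintro ⟨_, _⟩ ⟨hv, ⟨z, rfl⟩, ⟨w, rfl⟩⟩
    rw [heval (z, w)] at hv
    push_cast at hv
    exact hdn (Int.natCast_dvd_natCast.mp ⟨_, (mul_left_cancel₀ hd' hv).symm⟩)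

lemma card_roots_filter (ha : (f.a : ZMod p) ≠ 0) {v : ℤ × ℤ} (hv : (p : ℤ) ∣ f.eval v) :
    #{u ∈ f.roots p | (v.1 : ZMod p) = u * v.2} =
      if (p : ℤ) ∣ v.1 ∧ (p : ℤ) ∣ v.2 then #(f.roots p) else 1 := by
  simp only [← ZMod.intCast_zmod_eq_zero_iff_dvd, eval] at hv ⊢
  push_cast at hv
  by_cases hy : (v.2 : ZMod p) = 0
  · have hx : (v.1 : ZMod p) = 0 := by simpa [hy, ha] using hv
    simp [hx, hy]
  · rw [if_neg fun h => hy h.2, card_eq_one]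
    refine ⟨v.1 / v.2, ?_⟩
    ext u
    simp only [roots, mem_filter, mem_univ, true_and, mem_singleton, eq_div_iff hy]
    refine ⟨fun h => h.2.symm, fun h => ⟨?_, h.symm⟩⟩
    rw [← h] at hv
    refine (mul_eq_zero_iff_right (pow_ne_zero 2 hy)).mp ?_
    linear_combination hv

lemma PosDef.repCount_mul_add_card_roots_mul (hf : f.PosDef) (ha : (f.a : ZMod p) ≠ 0) (n : ℕ) :
    f.repCount (p * n) + #(f.roots p) * dilate p f.repCount n =
      ∑ u ∈ f.roots p, (f.neighbor p u).repCount n + dilate p f.repCount n := by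
  classical
  set S := (hf.finite_setOf_eval_eq (p * n : ℕ)).toFinset with hS
  have ncard_eq (P : ℤ × ℤ → Prop) [DecidablePred P] :
      {v : ℤ × ℤ | f.eval v = (p * n : ℕ) ∧ P v}.ncard = #{v ∈ S | P v} := by
    rw [← Set.ncard_coe_finset]
    congr 1
    ext v
    simp [hS]
  have hcount : f.repCount (p * n) = #S := Set.ncard_eq_toFinset_card _ _
  have hsum : ∑ u ∈ f.roots p, (f.neighbor p u).repCount n =
      ∑ v ∈ S, if (p : ℤ) ∣ v.1 ∧ (p : ℤ) ∣ v.2 then #(f.roots p) else 1 := by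
    rw [sum_congr rfl fun u hu => (repCount_neighbor hu n).trans (ncard_eq _)]
    refine (sum_card_bipartiteAbove_eq_sum_card_bipartiteBelow
      (fun (u : ZMod p) (v : ℤ × ℤ) => (v.1 : ZMod p) = u * v.2)).trans
      (sum_congr rfl fun v hv => card_roots_filter ha ?_)
    have hv : f.eval v = (p * n : ℕ) := by simpa [hS] using hv
    rw [hv]
    exact_mod_cast dvd_mul_right p n
  rw [hcount, hsum, dilate_repCount f (Fact.out : p.Prime).ne_zero, ncard_eq, card_eq_sum_ones S,
    card_filter, mul_sum, ← sum_add_distrib, ← sum_add_distrib]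
  refine sum_congr rfl fun v _ => ?_
  split_ifs <;> ring

lemma card_roots_eq_legendreSym_add_one (hp : p ≠ 2) (ha : (f.a : ZMod p) ≠ 0) :
    (#(f.roots p) : ℤ) = legendreSym p f.disc + 1 := by
  have : NeZero (2 : ZMod p) := ⟨Ring.two_ne_zero (by rwa [ZMod.ringChar_zmod_n])⟩
  rw [← legendreSym.card_sqrts p hp]
  congr 1
  refine card_nbij' (fun u => 2 * f.a * u + f.b) (fun t => (t - f.b) / (2 * f.a)) ?_ ?_ ?_ ?_
  · intro u hu
    have hu : (f.a : ZMod p) * u ^ 2 + f.b * u + f.c = 0 := by simpa [roots] using hu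
    suffices (2 * f.a * u + f.b) ^ 2 = (f.disc : ZMod p) by simpa using this
    simp only [disc, Int.cast_sub, Int.cast_mul, Int.cast_pow, Int.cast_ofNat]
    linear_combination 4 * (f.a : ZMod p) * hu
  · intro t ht
    have ht : t ^ 2 = (f.disc : ZMod p) := by simpa using ht
    simp only [disc, Int.cast_sub, Int.cast_mul, Int.cast_pow, Int.cast_ofNat] at ht
    suffices (f.a : ZMod p) * ((t - f.b) / (2 * f.a)) ^ 2 + f.b * ((t - f.b) / (2 * f.a)) + f.c = 0
      by simpa [roots] using this
    field_simp
    linear_combination ht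
  · intro u _
    field_simp
    simp
  · intro t _
    field_simp
    simp

lemma card_roots_two (ha : Odd f.a) (hD : f.disc % 8 = 1) : #(f.roots 2) = 2 := by
  have hroots : f.roots 2 = univ := by
    ext u
    rw [roots, ZMod.intCast_eq_one_iff_odd.mpr ha, ZMod.intCast_eq_one_iff_odd.mpr (odd_b hD),
      ZMod.intCast_eq_zero_iff_even.mpr (even_c ha hD)]
    revert u
    decide
  rw [hroots, card_univ, ZMod.card]

end Neighbors

section HeckeRelation

open Finset

variable {f g : BinQuadForm} {p : ℕ}

lemma card_roots_of_disc_eq_neg_fifteen [Fact p.Prime] (hD : f.disc = -15)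
    (ha : (f.a : ZMod p) ≠ 0) : (#(f.roots p) : ℤ) = 1 + chiNeg15 p := by
  by_cases hp : p = 2
  · subst hp
    have hodd : Odd f.a := by
      rwa [← Int.not_even_iff_odd, ← ZMod.intCast_eq_zero_iff_even]
    rw [card_roots_two hodd (by rw [hD]; rfl)]
    rfl
  · rw [card_roots_eq_legendreSym_add_one hp ha, hD, legendreSym_neg_fifteen hp, add_comm]

lemma PosDef.repCount_mul_add [Fact p.Prime] (hf : f.PosDef) (hD : f.disc = -15)
    (ha : (f.a : ZMod p) ≠ 0)
    (hg : ∀ h : BinQuadForm, h.PosDef → h.disc = -15 → h.a = p * f.a → h.IsEquiv g) (n : ℕ) :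
    (f.repCount (p * n) + chiNeg15 p * dilate p f.repCount n : ℤ) =
      (1 + chiNeg15 p) * g.repCount n := by
  have hcard := card_roots_of_disc_eq_neg_fifteen hD ha
  have hsum : ∑ u ∈ f.roots p, (f.neighbor p u).repCount n = #(f.roots p) * g.repCount n := by
    rw [← smul_eq_mul, ← sum_const]
    exact sum_congr rfl fun u hu =>
      (hg _ (hf.neighbor hu) (hD ▸ disc_neighbor hu) rfl).repCount_eq ▸ rfl
  have key := hf.repCount_mul_add_card_roots_mul ha n
  rw [hsum] at key
  zify at key
  rw [hcard] at key
  linear_combination key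

/-- The total number of representations of `n` by the two classes of forms of
discriminant `-15`. -/
noncomputable def classRepCount (n : ℕ) : ℤ :=
  principalForm.repCount n + nonprincipalForm.repCount n

lemma dilate_classRepCount (d n : ℕ) :
    dilate d classRepCount n =
      dilate d principalForm.repCount n + dilate d nonprincipalForm.repCount n := by
  simp only [dilate, classRepCount]
  split_ifs <;> simp

lemma exists_posDef_a_ne_zero (hp : p.Prime) :
    ∃ f : BinQuadForm, f.PosDef ∧ f.disc = -15 ∧ (f.a : ZMod p) ≠ 0 ∧ (f.a : ZMod 3) = 2 ∧
      (p = 3 → (f.a : ZMod 5) = 2) := by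
  by_cases h2 : p = 2
  -- `2 x² + x y + 2 y²` represents odd numbers, but its leading coefficient is even.
  · subst h2
    refine ⟨⟨5, 5, 2⟩, ⟨by norm_num, by norm_num [disc]⟩, rfl, ?_, rfl, ?_⟩
    · decide
    · decide
  · refine ⟨nonprincipalForm, ⟨by decide, by decide⟩, rfl, ?_, rfl, fun _ => rfl⟩
    have h2p := (ZMod.natCast_eq_zero_iff 2 p).not.mpr
      ((Nat.prime_dvd_prime_iff_eq hp Nat.prime_two).not.mpr h2)
    simpa [nonprincipalForm] using h2p

lemma exists_neighbor_classes (hp : p.Prime) {a : ℤ} (ha3 : (a : ZMod 3) = 2)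
    (ha5 : p = 3 → (a : ZMod 5) = 2) :
    ∃ g g' : BinQuadForm, (∀ n, (g.repCount n + g'.repCount n : ℤ) = classRepCount n) ∧
      (∀ h : BinQuadForm, h.PosDef → h.disc = -15 → h.a = p * 1 → h.IsEquiv g) ∧
      ∀ h : BinQuadForm, h.PosDef → h.disc = -15 → h.a = p * a → h.IsEquiv g' := by
  have hp3 : (p : ZMod 3) = 0 ∨ (p : ZMod 3) = 1 ∨ (p : ZMod 3) = 2 := by
    generalize (p : ZMod 3) = r
    decide +revert
  rcases hp3 with hp3 | hp3 | hp3
  · obtain rfl : 3 = p :=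
      (Nat.prime_dvd_prime_iff_eq Nat.prime_three hp).mp ((ZMod.natCast_eq_zero_iff p 3).mp hp3)
    refine ⟨nonprincipalForm, principalForm, fun _ => add_comm _ _, fun h hh hD ha => ?_,
      fun h hh hD ha => ?_⟩
    · exact isEquiv_nonprincipalForm_of_a hh hD (.inr (by rw [ha]; rfl))
    · exact isEquiv_principalForm_of_a hh hD (.inr (by rw [ha, Int.cast_mul, ha5 rfl]; rfl))
  · refine ⟨principalForm, nonprincipalForm, fun _ => rfl, fun h hh hD ha => ?_,
      fun h hh hD ha => ?_⟩
    · exact isEquiv_principalForm_of_a hh hD (.inl (by simp [ha, hp3]))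
    · exact isEquiv_nonprincipalForm_of_a hh hD (.inl (by simp [ha, hp3, ha3]))
  · refine ⟨nonprincipalForm, principalForm, fun _ => add_comm _ _, fun h hh hD ha => ?_,
      fun h hh hD ha => ?_⟩
    · exact isEquiv_nonprincipalForm_of_a hh hD (.inl (by simp [ha, hp3]))
    · exact isEquiv_principalForm_of_a hh hD (.inl (by simp [ha, hp3, ha3]; rfl))

lemma classRepCount_prime_mul (hp : p.Prime) (n : ℕ) :
    classRepCount (p * n) + chiNeg15 p * dilate p classRepCount n =
      (1 + chiNeg15 p) * classRepCount n := by
  have := Fact.mk hp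
  obtain ⟨f, hfpos, hfD, hfp, hf3, hf5⟩ := exists_posDef_a_ne_zero hp
  have hf := isEquiv_nonprincipalForm_of_a hfpos hfD (.inl hf3)
  obtain ⟨g, g', hsum, hg, hg'⟩ := exists_neighbor_classes hp hf3 hf5
  have hpos : principalForm.PosDef := by simp [PosDef, principalForm, disc]
  have hC := hpos.repCount_mul_add rfl (by simp [principalForm]) hg n
  have hD := hfpos.repCount_mul_add hfD hfp hg' n
  rw [dilate_classRepCount, ← hsum n, classRepCount, ← hf.repCount_eq]
  linear_combination hC + hD

end HeckeRelation

section DirichletFormula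

lemma classRepCount_one : classRepCount 1 = 2 := by
  have hprincipal : {v | principalForm.eval v = (1 : ℕ)} = {(1, 0), (-1, 0)} := by
    ext ⟨x, y⟩
    have heval : principalForm.eval (x, y) = x ^ 2 + x * y + 4 * y ^ 2 := by
      simp [eval, principalForm]
    simp only [Set.mem_ofPred_eq, heval, Set.mem_insert_iff, Set.mem_singleton_iff, Prod.mk.injEq]
    refine ⟨fun h => ?_, by rintro (⟨rfl, rfl⟩ | ⟨rfl, rfl⟩) <;> rfl⟩
    have hy : y = 0 := by
      rw [← sq_eq_zero_iff]
      push_cast at h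
      nlinarith [sq_nonneg (2 * x + y), sq_nonneg y]
    simpa [hy, sq_eq_one_iff] using h
  have hnonprincipal : {v | nonprincipalForm.eval v = (1 : ℕ)} = ∅ :=
    Set.eq_empty_iff_forall_notMem.mpr fun v hv =>
      nonprincipalForm_eval_zmod_three v (by rw [show _ = _ from hv]; rfl)
  rw [classRepCount, repCount, repCount, hprincipal, hnonprincipal,
    Set.ncard_pair (by decide), Set.ncard_empty]
  rfl

lemma classRepCount_eq_two_mul_sum_divisors {n : ℕ} (hn : n ≠ 0) :
    classRepCount n = 2 * ∑ d ∈ n.divisors, chiNeg15 d := by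
  rw [← classRepCount_one]
  exact eq_mul_sum_divisors_of_prime_mul chiNeg15Hom
    (fun p hp m _ => classRepCount_prime_mul hp m) hn

end DirichletFormula

section EvenSublattice

variable {f : BinQuadForm} {n : ℕ}

/-- The restriction of `f` to the sublattice of the vectors `(x, 2y)`, in these coordinates. -/
def restrictEven (f : BinQuadForm) : BinQuadForm := ⟨f.a, 2 * f.b, 4 * f.c⟩

lemma repCount_restrictEven_of_odd (ha : Odd f.a) (hD : f.disc % 8 = 1) (hn : Odd n) :
    f.restrictEven.repCount n = f.repCount n := by
  have heval (v : ℤ × ℤ) : f.eval (v.1, 2 * v.2) = f.restrictEven.eval v := by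
    simp only [eval, restrictEven]; ring
  have hinj : Function.Injective fun v : ℤ × ℤ => (v.1, 2 * v.2) := by
    rintro ⟨x, y⟩ ⟨x', y'⟩ h
    simpa using h
  rw [repCount, ← Set.ncard_image_of_injective _ hinj, repCount]
  congr 1
  ext ⟨x, y⟩
  constructor
  · rintro ⟨v, hv, hvx⟩
    rw [← hvx]
    exact (heval v).trans hv
  · intro hv
    obtain ⟨z, rfl⟩ : Even y := by
      have hodd : Odd (f.eval (x, y)) := by
        rw [show f.eval (x, y) = n from hv]
        exact_mod_cast hn
      have hb := odd_b hD
      have hc := even_c ha hD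
      by_contra hy
      simp only [eval, ← Int.not_even_iff_odd] at hodd ha hb
      simp [ha, hb, hc, hy, parity_simps] at hodd
    rw [← two_mul] at hv ⊢
    exact ⟨(x, z), (heval (x, z)).symm.trans hv, rfl⟩

lemma repCount_restrictEven_of_even (ha : Odd f.a) (hn : Even n) :
    f.restrictEven.repCount n = dilate 4 f.repCount n := by
  have heval (v : ℤ × ℤ) : f.restrictEven.eval (2 * v.1, v.2) = 4 * f.eval v := by
    simp only [eval, restrictEven]; ring
  have hinj : Function.Injective fun v : ℤ × ℤ => (2 * v.1, v.2) := by
    rintro ⟨x, y⟩ ⟨x', y'⟩ h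
    simpa using h
  have hfst {v : ℤ × ℤ} (hv : f.restrictEven.eval v = n) : Even v.1 := by
    have heven : Even (f.restrictEven.eval v) := by
      rw [hv]
      exact_mod_cast hn
    have heval : f.restrictEven.eval v =
        f.a * v.1 ^ 2 + 2 * (f.b * v.1 * v.2 + 2 * f.c * v.2 ^ 2) := by
      simp only [eval, restrictEven]; ring
    rw [← Int.not_even_iff_odd] at ha
    simpa [heval, ha, parity_simps] using heven
  have hset : {v | f.restrictEven.eval v = n} =
      (fun v : ℤ × ℤ => (2 * v.1, v.2)) '' {v | 4 * f.eval v = n} := by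
    ext ⟨x, y⟩
    constructor
    · intro hv
      obtain ⟨z, rfl⟩ : Even x := hfst hv
      rw [← two_mul] at hv ⊢
      exact ⟨(z, y), (heval (z, y)).symm.trans hv, rfl⟩
    · rintro ⟨v, hv, hvx⟩
      rw [← hvx]
      exact (heval v).trans hv
  rw [repCount, hset, Set.ncard_image_of_injective _ hinj]
  by_cases h4 : 4 ∣ n
  · obtain ⟨m, rfl⟩ := h4
    rw [dilate_mul four_ne_zero, repCount]
    simp
  · rw [dilate_of_not_dvd h4]
    convert Set.ncard_empty (ℤ × ℤ)
    exact Set.eq_empty_iff_forall_notMem.mpr fun v hv =>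
      h4 (Int.natCast_dvd_natCast.mp ⟨f.eval v, hv.symm⟩)

lemma restrictEven_principalForm_isEquiv : principalForm.restrictEven.IsEquiv ⟨1, 0, 15⟩ := by
  simpa [restrictEven, principalForm] using isEquiv_shift 1 2 16 (-1)

lemma restrictEven_isEquiv : (restrictEven ⟨5, 5, 2⟩).IsEquiv ⟨3, 0, 5⟩ := by
  have hshift : IsEquiv ⟨5, 10, 8⟩ ⟨5, 0, 3⟩ := by simpa using isEquiv_shift 5 10 8 (-1)
  exact hshift.trans (isEquiv_swap 5 0 3)

lemma repCount_add_repCount_eq (n : ℕ) :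
    (repCount ⟨3, 0, 5⟩ n + repCount ⟨1, 0, 15⟩ n : ℤ) =
      classRepCount n - 2 * dilate 2 classRepCount n + 2 * dilate 4 classRepCount n := by
  have hD : IsEquiv ⟨5, 5, 2⟩ nonprincipalForm :=
    isEquiv_nonprincipalForm_of_a ⟨by norm_num, by norm_num [disc]⟩ rfl (.inl rfl)
  have ha5 : Odd (5 : ℤ) := by decide
  have ha1 : Odd principalForm.a := by decide
  rw [← restrictEven_isEquiv.repCount_eq, ← restrictEven_principalForm_isEquiv.repCount_eq]
  obtain ⟨m, rfl | rfl⟩ := n.even_or_odd'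
  · have hecke := classRepCount_prime_mul Nat.prime_two m
    rw [show chiNeg15 2 = 1 by decide] at hecke
    have hdilate : dilate 4 classRepCount (2 * m) = dilate 2 classRepCount m :=
      dilate_mul_mul two_ne_zero 2 _ m
    have heven : Even (2 * m) := even_two_mul m
    rw [repCount_restrictEven_of_even ha5 heven, repCount_restrictEven_of_even ha1 heven,
      hD.repCount_eq, add_comm, ← dilate_classRepCount, dilate_mul two_ne_zero, hdilate]
    linear_combination -hecke
  · have hodd : Odd (2 * m + 1) := odd_two_mul_add_one m
    rw [repCount_restrictEven_of_odd ha5 rfl hodd, repCount_restrictEven_of_odd ha1 rfl hodd,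
      hD.repCount_eq, dilate_of_not_dvd (by omega), dilate_of_not_dvd (by omega), classRepCount]
    ring

end EvenSublattice

end BinQuadForm

open BinQuadForm

section LSeries

open Complex

variable {s : ℂ}

lemma hasSum_one_div_cpow_of_finite_fibers {α : Type*} {φ : α → ℕ} (hφ : ∀ x, φ x ≠ 0)
    (hfin : ∀ n, {x | φ x = n}.Finite)
    (hsum : LSeriesSummable (fun n => ({x | φ x = n}.ncard : ℂ)) s) :
    HasSum (fun x => 1 / (φ x : ℂ) ^ s) (LSeries (fun n => ({x | φ x = n}.ncard : ℂ)) s) := by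
  have hterm (n : ℕ) : LSeries.term (fun n => ({x | φ x = n}.ncard : ℂ)) s n =
      Nat.card {x // φ x = n} • (1 / (n : ℂ) ^ s) := by
    rcases eq_or_ne n 0 with rfl | hn
    · have : IsEmpty {x // φ x = 0} := ⟨fun x => hφ x x.2⟩
      simp
    · rw [LSeries.term_of_ne_zero hn, nsmul_eq_mul, mul_one_div]
      rfl
  have (n : ℕ) : Finite {x // φ x = n} := hfin n
  have hfiber (n : ℕ) : HasSum (fun _ : {x // φ x = n} => 1 / (n : ℂ) ^ s)
      (LSeries.term (fun n => ({x | φ x = n}.ncard : ℂ)) s n) := by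
    rw [hterm, ← tsum_const]
    exact (Summable.of_finite).hasSum
  have hsigma : Summable fun x : Σ n, {x // φ x = n} => 1 / (x.1 : ℂ) ^ s := by
    refine .of_norm ((summable_sigma_of_nonneg fun _ => norm_nonneg _).mpr
      ⟨fun _ => Summable.of_finite, hsum.norm.congr fun n => ?_⟩)
    rw [hterm, RCLike.norm_nsmul ℂ, ← tsum_const]
  rw [← (Equiv.sigmaFiberEquiv φ).hasSum_iff]
  have hcomp : (fun x => 1 / (φ x : ℂ) ^ s) ∘ Equiv.sigmaFiberEquiv φ =
      fun x : Σ n, {x // φ x = n} => 1 / (x.1 : ℂ) ^ s := by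
    funext ⟨n, x, hx⟩
    simp [hx]
  rw [hcomp]
  exact HasSum.sigma_of_hasSum hsum.LSeriesHasSum hfiber hsigma

lemma BinQuadForm.PosDef.hasSum_one_div_eval_cpow {f : BinQuadForm} (hf : f.PosDef)
    (hsum : LSeriesSummable (fun n => (f.repCount n : ℂ)) s) :
    HasSum (fun v : {v : ℤ × ℤ // v ≠ 0} => 1 / (f.eval v : ℂ) ^ s)
      (LSeries (fun n => (f.repCount n : ℂ)) s) := by
  set φ : {v : ℤ × ℤ // v ≠ 0} → ℕ := fun v => (f.eval v).natAbs
  have hφ (v) : (φ v : ℤ) = f.eval v := Int.natAbs_of_nonneg (hf.eval_pos v.2).le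
  have hne (v) : φ v ≠ 0 := Int.natAbs_ne_zero.mpr (hf.eval_pos v.2).ne'
  have himage {n : ℕ} (hn : n ≠ 0) : Subtype.val '' {v | φ v = n} = {v | f.eval v = n} := by
    ext v
    constructor
    · rintro ⟨w, rfl, rfl⟩
      exact (hφ w).symm
    · intro hv
      have hv0 : v ≠ 0 := by
        rintro rfl
        exact hn (by simpa [eval, eq_comm] using hv)
      exact ⟨⟨v, hv0⟩, Int.natCast_inj.mp ((hφ ⟨v, hv0⟩).trans hv), rfl⟩
  have hcard {n : ℕ} (hn : n ≠ 0) : ({v | φ v = n}.ncard : ℂ) = f.repCount n := by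
    rw [repCount, ← himage hn, Set.ncard_image_of_injective _ Subtype.val_injective]
  have hfin (n : ℕ) : {v | φ v = n}.Finite := by
    refine (hf.finite_setOf_eval_eq n).preimage Subtype.val_injective.injOn |>.subset ?_
    rintro v rfl
    exact (hφ v).symm
  have h := hasSum_one_div_cpow_of_finite_fibers hne hfin ((LSeriesSummable_congr s hcard).mpr hsum)
  rw [LSeries_congr hcard s] at h
  exact h.congr_fun fun v => by rw [← hφ]; simp

lemma LSeriesHasSum_dilate {d : ℕ} (hd : d ≠ 0) {F : ℕ → ℂ} {a : ℂ} (hF : LSeriesHasSum F s a) :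
    LSeriesHasSum (dilate d F) s ((d : ℂ) ^ (-s) * a) := by
  have hinj : Function.Injective (d * ·) := fun _ _ h =>
    Nat.eq_of_mul_eq_mul_left (Nat.pos_of_ne_zero hd) h
  refine (hinj.hasSum_iff fun n hn => ?_).mp ((hF.mul_left ((d : ℂ) ^ (-s))).congr_fun fun n => ?_)
  · have hdn : ¬d ∣ n := fun ⟨k, hk⟩ => hn ⟨k, hk.symm⟩
    simp [LSeries.term, dilate_of_not_dvd hdn]
  · rcases eq_or_ne n 0 with rfl | hn
    · simp
    · rw [Function.comp_apply, LSeries.term_of_ne_zero (mul_ne_zero hd hn),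
        LSeries.term_of_ne_zero hn, dilate_mul hd, Nat.cast_mul, natCast_mul_natCast_cpow, cpow_neg]
      field_simp

lemma LSeriesHasSum_sum_divisors (hs : 1 < s.re) {F : ℕ → ℂ} {a : ℂ} (hF : LSeriesHasSum F s a) :
    LSeriesHasSum (fun n => ∑ d ∈ n.divisors, F d) s (riemannZeta s * a) := by
  convert (LSeriesHasSum_one hs).convolution hF using 1
  funext n
  rw [LSeries.convolution_def]
  simp only [Pi.one_apply, one_mul]
  exact (Nat.sum_divisorsAntidiagonal' fun _ d => F d).symm

lemma LSeriesHasSum_chiNeg15 (hs : 1 < s.re) :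
    LSeriesHasSum (fun n => (chiNeg15 n : ℂ)) s (LSer chiNeg15 s) := by
  have hbound (n : ℕ) : ‖(chiNeg15 n : ℂ)‖ ≤ 1 := by
    rw [chiNeg15_eq_jacobiSym]
    rcases jacobiSym.trichotomy n 15 with h | h | h <;> simp [h]
  have hsum : LSeriesSummable (fun n => (chiNeg15 n : ℂ)) s :=
    LSeriesSummable_of_bounded_of_one_lt_re (fun n _ => hbound n) hs
  convert hsum.LSeriesHasSum using 1
  rw [LSeries, LSer, Summable.tsum_eq_zero_add hsum, LSeries.term_zero, zero_add]
  refine tsum_congr fun n => ?_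
  rw [LSeries.term_of_ne_zero n.succ_ne_zero, Nat.cast_succ]

lemma LSeriesHasSum_classRepCount (hs : 1 < s.re) :
    LSeriesHasSum (fun n => (classRepCount n : ℂ)) s (2 * riemannZeta s * LSer chiNeg15 s) := by
  have h := (LSeriesHasSum_sum_divisors hs (LSeriesHasSum_chiNeg15 hs)).smul 2
  rw [← mul_assoc] at h
  refine (LSeriesHasSum_congr s _ fun {n} hn => ?_).mpr h
  rw [classRepCount_eq_two_mul_sum_divisors hn]
  simp

lemma LSeriesHasSum_repCount_add_repCount (hs : 1 < s.re) :
    LSeriesHasSum (fun n => (repCount ⟨3, 0, 5⟩ n + repCount ⟨1, 0, 15⟩ n : ℂ)) s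
      (2 * (1 + (2 : ℂ) ^ (1 - 2 * s) - (2 : ℂ) ^ (1 - s)) * riemannZeta s * LSer chiNeg15 s) := by
  have h := LSeriesHasSum_classRepCount hs
  have h2 := LSeriesHasSum_dilate two_ne_zero h
  have h4 := LSeriesHasSum_dilate four_ne_zero h
  convert (h.sub (h2.smul 2)).add (h4.smul 2) using 1
  · funext n
    simp only [Pi.add_apply, Pi.sub_apply, Pi.smul_apply, smul_eq_mul, ← intCast_dilate]
    exact_mod_cast repCount_add_repCount_eq n
  · have hpow : (2 : ℂ) ^ (1 - s) = 2 * (2 : ℂ) ^ (-s) := by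
      rw [sub_eq_add_neg, cpow_add _ _ two_ne_zero, cpow_one]
    have hfour : (4 : ℂ) ^ (-s) = (2 : ℂ) ^ (-s) * (2 : ℂ) ^ (-s) := by
      rw [show (4 : ℂ) = (2 : ℕ) * (2 : ℕ) by norm_num, natCast_mul_natCast_cpow, Nat.cast_ofNat]
    have hpow' : (2 : ℂ) ^ (1 - 2 * s) = 2 * (4 : ℂ) ^ (-s) := by
      rw [hfour, ← cpow_add _ _ two_ne_zero, sub_eq_add_neg, cpow_add _ _ two_ne_zero, cpow_one,
        ← neg_add, ← two_mul]
    rw [hpow, hpow']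
    simp only [Nat.cast_ofNat]
    ring

lemma LSeriesSummable_of_natCast_add {F G : ℕ → ℕ}
    (h : LSeriesSummable (fun n => (F n + G n : ℂ)) s) :
    LSeriesSummable (fun n => (F n : ℂ)) s := by
  refine .of_norm_bounded h.norm fun n => LSeries.norm_term_le s ?_
  norm_cast
  exact Nat.le_add_right _ _

end LSeries

/-- Lemma 3.3 (2): for `Re(s) > 1`,
`∑'_{(m,k)≠0} [ (3m²+5k²)^{-s} + (m²+15k²)^{-s} ] = 2(1 + 2^{1−2s} − 2^{1−s}) ζ(s) L(χ₋₁₅, s)`. -/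
theorem lattice_sum_eq_two_factor_zeta_L (s : ℂ) (hs : 1 < s.re) :
    (∑' p : {p : ℤ × ℤ // p ≠ 0},
        (1 / ((3 * (p.1.1 : ℂ) ^ 2 + 5 * (p.1.2 : ℂ) ^ 2) ^ s) +
          1 / (((p.1.1 : ℂ) ^ 2 + 15 * (p.1.2 : ℂ) ^ 2) ^ s))) =
      2 * (1 + (2 : ℂ) ^ (1 - 2 * s) - (2 : ℂ) ^ (1 - s)) * riemannZeta s *
        LSer chiNeg15 s := by
  have hsum := LSeriesHasSum_repCount_add_repCount hs
  have h35 := LSeriesSummable_of_natCast_add hsum.LSeriesSummable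
  have h15 : LSeriesSummable (fun n => (repCount ⟨1, 0, 15⟩ n : ℂ)) s :=
    LSeriesSummable_of_natCast_add (by simpa only [add_comm] using hsum.LSeriesSummable)
  have hlattice := (PosDef.hasSum_one_div_eval_cpow ⟨by norm_num, by norm_num [disc]⟩ h35).add
    (PosDef.hasSum_one_div_eval_cpow ⟨by norm_num, by norm_num [disc]⟩ h15)
  rw [← LSeries_add h35 h15] at hlattice
  rw [← hsum.LSeries_eq]
  refine Eq.trans (tsum_congr fun v => ?_) hlattice.tsum_eq
  simp [eval]
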